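/- Let ℓ ≥ 2 and d be positive integers, and let H be a bipartite C_{2ℓ}-free graph with minimum degree at least d. Then for any vertex u of H, the number of vertices at distance at most ℓ from u is at least (d/(4ℓ))^ℓ. -/

import Mathlib

namespace BallGrowth
open SimpleGraph

/-- Greedy construction of long paths in a bipartite graph of large minimum degree. -/
lemma greedy {V : Type*} [DecidableEq V] (H : SimpleGraph V) [DecidableRel H.Adj]
    (S : Finset V) (C : V → Bool)
    (hC : ∀ a ∈ S, ∀ b ∈ S, H.Adj a b → C a ≠ C b) (l : ℕ)
    (hdeg : ∀ a ∈ S, l + 1 ≤ (S.filter (H.Adj a)).card) (x y y' : V) (hx : x ∈ S)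
    (hxy : x ≠ y) (hxy' : x ≠ y') :
    ∀ n : ℕ, n / 2 + 2 ≤ l → ∃ (w : V) (P : H.Walk x w), P.IsPath ∧ P.length = n ∧
      (∀ v ∈ P.support, v ∈ S ∧ v ≠ y ∧ v ≠ y') ∧ (C w = C x ↔ Even n) ∧
      (P.support.toFinset.filter (fun v => C v ≠ C w)).card ≤ (n + 1) / 2 ∧
      (P.support.toFinset.filter (fun v => C v = C w)).card ≤ n / 2 + 1 := by
  intro n
  induction n with
  | zero =>
    intro _
    refine ⟨x, Walk.nil, by simp, by simp, ?_, by simp, ?_, ?_⟩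
    · simp [hx, hxy, hxy']
    · simp [Finset.filter_singleton]
    · simp [Finset.filter_singleton]
  | succ n ih =>
    intro hn
    obtain ⟨w, P, hP, hlen, hsup, hcol, hopp, hsame⟩ := ih (by omega)
    have hwS : w ∈ S := (hsup w P.end_mem_support).1
    have hd := hdeg w hwS
    have hex : ∃ v ∈ S.filter (H.Adj w),
        v ∉ (P.support.toFinset.filter (fun v => C v ≠ C w)) ∪ {y, y'} := by
      apply Finset.exists_mem_notMem_of_card_lt_card
      have h1 := Finset.card_union_le (P.support.toFinset.filter (fun v => C v ≠ C w)) {y, y'}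
      have h2 : ({y, y'} : Finset V).card ≤ 2 := Finset.card_le_two
      omega
    obtain ⟨v, hv, hv'⟩ := hex
    obtain ⟨hvS, hadj⟩ := Finset.mem_filter.1 hv
    have hcv := hC w hwS v hvS hadj
    simp only [Finset.mem_union, Finset.mem_filter, List.mem_toFinset, Finset.mem_insert,
      Finset.mem_singleton, not_or, not_and] at hv'
    have hvP : v ∉ P.support := fun h => hv'.1 h hcv.symm
    refine ⟨v, P.concat hadj, hP.concat hvP hadj, by simp [hlen], ?_, ?_, ?_, ?_⟩
    · intro a ha
      rw [Walk.support_concat] at ha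
      simp only [List.mem_append, List.mem_singleton] at ha
      rcases ha with ha | rfl
      · exact hsup a ha
      · exact ⟨hvS, hv'.2⟩
    · rw [Nat.even_add_one, ← hcol]
      revert hcv
      cases C w <;> cases C v <;> cases C x <;> simp
    · refine le_trans (Finset.card_le_card ?_) (hsame.trans (by omega))
      intro a ha
      simp only [Walk.support_concat, Finset.mem_filter, List.mem_toFinset,
        List.mem_append, List.mem_singleton] at ha ⊢
      rcases ha with ⟨ha | rfl, hc⟩
      · refine ⟨ha, ?_⟩
        revert hcv hc
        cases C w <;> cases C v <;> cases C a <;> simp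
      · exact absurd rfl hc
    · have : (P.concat hadj).support.toFinset.filter (fun a => C a = C v) ⊆
          insert v (P.support.toFinset.filter (fun v => C v ≠ C w)) := by
        intro a ha
        simp only [Walk.support_concat, Finset.mem_filter, List.mem_toFinset,
          List.mem_append, List.mem_singleton, Finset.mem_insert] at ha ⊢
        rcases ha with ⟨ha | rfl, hc⟩
        · right
          refine ⟨ha, ?_⟩
          rw [hc]; exact hcv.symm
        · left; rfl
      have h1 := Finset.card_le_card this
      have h2 := Finset.card_insert_le v (P.support.toFinset.filter (fun v => C v ≠ C w))
      omega

/-- Extend a path along iterates of a function. -/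
lemma extend {V : Type*} (H : SimpleGraph V) (f : V → V) (a b : V) (P : H.Walk a b)
    (hP : P.IsPath) (r : ℕ) (hadj : ∀ q < r, H.Adj (f^[q] b) (f^[q+1] b))
    (hnot : ∀ q, 1 ≤ q → q ≤ r → f^[q] b ∉ P.support)
    (hinj : ∀ q q', q < q' → q' ≤ r → f^[q] b ≠ f^[q'] b) :
    ∃ Q : H.Walk a (f^[r] b), Q.IsPath ∧ Q.length = P.length + r ∧
      ∀ v ∈ Q.support, v ∈ P.support ∨ ∃ q, 1 ≤ q ∧ q ≤ r ∧ v = f^[q] b := by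
  induction r with
  | zero => exact ⟨P, hP, rfl, fun v hv => Or.inl hv⟩
  | succ r ih =>
    obtain ⟨Q, hQ, hlen, hsup⟩ := ih (fun q hq => hadj q (by omega))
      (fun q h1 h2 => hnot q h1 (by omega)) (fun q q' h1 h2 => hinj q q' h1 (by omega))
    refine ⟨Q.concat (hadj r (by omega)), hQ.concat ?_ _, ?_, ?_⟩
    · intro h
      rcases hsup _ h with h | ⟨q, h1, h2, h3⟩
      · exact hnot (r+1) (by omega) le_rfl h
      · exact hinj q (r+1) (by omega) le_rfl h3.symm
    · rw [Walk.length_concat]; omega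
    · intro v hv
      rw [Walk.support_concat] at hv
      simp only [List.mem_append, List.mem_singleton] at hv
      rcases hv with hv | rfl
      · rcases hsup v hv with h | ⟨q, h1, h2, h3⟩
        · exact Or.inl h
        · exact Or.inr ⟨q, h1, by omega, h3⟩
      · exact Or.inr ⟨r+1, by omega, le_rfl, rfl⟩

/-- Close a path at the bottom of a tree into a cycle through the tree. -/
lemma tree_cycle {V : Type*} (H : SimpleGraph V) (f : V → V) (δ : V → ℕ) (i s k : ℕ)
    (hk : 1 ≤ k) (y w : V)
    (P : H.Walk y w) (hP : P.IsPath) (hlen : P.length = 2 * k)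
    (hsup : ∀ v ∈ P.support, i ≤ δ v)
    (hy : ∀ q < s + 1, H.Adj (f^[q] y) (f^[q+1] y))
    (hw : ∀ q < s + 1, H.Adj (f^[q] w) (f^[q+1] w))
    (hy' : ∀ q ≤ s + 1, δ (f^[q] y) + q = i)
    (hw' : ∀ q ≤ s + 1, δ (f^[q] w) + q = i)
    (heq : f^[s+1] y = f^[s+1] w) (hne : f^[s] y ≠ f^[s] w) :
    ∃ (v : V) (c : H.Walk v v), c.IsCycle ∧ c.length = 2 * (k + (s + 1)) := by
  obtain ⟨Q, hQ, hQl, hQs⟩ := extend H f y w P hP (s+1) hw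
    (fun q h1 h2 h => by have := hsup _ h; have := hw' q h2; omega)
    (fun q q' h1 h2 h => by
      have e1 := hw' q (by omega); have e2 := hw' q' h2; rw [h] at e1; omega)
  obtain ⟨R, hR, hRl, hRs⟩ := extend H f _ y Q.reverse hQ.reverse s
    (fun q hq => hy q (by omega))
    (fun q h1 h2 h => by
      rw [Walk.support_reverse, List.mem_reverse] at h
      have e1 := hy' q (by omega)
      rcases hQs _ h with h | ⟨q', h3, h4, h5⟩
      · have := hsup _ h; omega
      · have e2 := hw' q' (by omega)
        rw [← h5] at e2
        have : q = q' := by omega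
        subst this
        apply hne
        have hs : s = (s - q) + q := by omega
        rw [hs, Function.iterate_add_apply, h5, ← Function.iterate_add_apply])
    (fun q q' h1 h2 h => by
      have e1 := hy' q (by omega); have e2 := hy' q' (by omega); rw [h] at e1; omega)
  rw [Walk.length_reverse] at hRl
  have hadj : H.Adj (f^[s] y) (f^[s+1] w) := heq ▸ hy s (by omega)
  refine ⟨_, Walk.cons hadj R, ?_, ?_⟩
  · rw [Walk.cons_isCycle_iff]
    refine ⟨hR, fun h => ?_⟩
    rw [Sym2.eq_swap] at h
    have := hR.length_eq_one_of_mem_edges h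
    omega
  · rw [Walk.length_cons]; omega

lemma exists_parent {V : Type*} (H : SimpleGraph V) (u v : V) (hr : H.Reachable u v)
    (h0 : H.dist u v ≠ 0) : ∃ p, H.Adj v p ∧ H.Reachable u p ∧ H.dist u p + 1 = H.dist u v := by
  obtain ⟨P, hP⟩ := hr.symm.exists_walk_length_eq_dist
  rw [H.dist_comm] at hP
  cases P with
  | nil => simp at h0
  | cons h Q =>
    rename_i p
    refine ⟨p, h, Q.reachable.symm, ?_⟩
    have h1 := dist_le Q.reverse
    rw [Walk.length_reverse] at h1
    rw [Walk.length_cons] at hP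
    obtain ⟨R, hR⟩ := Q.reachable.symm.exists_walk_length_eq_dist
    have h2 := dist_le (R.concat h.symm)
    rw [Walk.length_concat] at h2
    omega

lemma adj_dist {V : Type*} (H : SimpleGraph V) (hbip : H.Colorable 2) (u a b : V)
    (hr : H.Reachable u a) (hab : H.Adj a b) :
    H.dist u b = H.dist u a + 1 ∨ H.dist u a = H.dist u b + 1 := by
  obtain ⟨P, hP⟩ := hr.exists_walk_length_eq_dist
  obtain ⟨Q, hQ⟩ := (hr.trans hab.reachable).exists_walk_length_eq_dist
  have h1 := dist_le (P.concat hab)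
  have h2 := dist_le (Q.concat hab.symm)
  rw [Walk.length_concat] at h1 h2
  have c : H.Coloring Bool := hbip.toColoring (by simp)
  have e1 := c.even_length_iff_congr P
  have e2 := c.even_length_iff_congr Q
  have e3 := c.valid hab
  have : ¬ (Even P.length ↔ Even Q.length) := by
    rw [e1, e2]
    revert e3
    cases c a <;> cases c b <;> cases c u <;> simp
  have : P.length ≠ Q.length := fun h => this (by rw [h])
  omega

lemma degenerate_sum {V : Type*} [DecidableEq V] (H : SimpleGraph V) [DecidableRel H.Adj]
    (l : ℕ) (U : Finset V)
    (h : ∀ S ⊆ U, S.Nonempty → ∃ v ∈ S, (S.filter (H.Adj v)).card ≤ l) :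
    ∑ v ∈ U, (U.filter (H.Adj v)).card ≤ 2 * l * U.card := by
  induction hn : U.card generalizing U with
  | zero =>
    rw [Finset.card_eq_zero] at hn
    simp [hn]
  | succ n ih =>
    obtain ⟨v, hv, hvl⟩ := h U subset_rfl (Finset.card_pos.1 (by omega))
    have hc := Finset.card_erase_of_mem hv
    have ih' := ih (U.erase v) (fun S hS => h S (hS.trans (Finset.erase_subset _ _))) (by omega)
    rw [← Finset.add_sum_erase _ _ hv]
    have h1 : ∀ a ∈ U.erase v, (U.filter (H.Adj a)).card =
        ((U.erase v).filter (H.Adj a)).card + if H.Adj v a then 1 else 0 := by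
      intro a ha
      conv_lhs => rw [← Finset.insert_erase hv, Finset.filter_insert]
      by_cases hav : H.Adj a v
      · rw [if_pos hav, if_pos hav.symm, Finset.card_insert_of_notMem (by simp)]
      · rw [if_neg hav, if_neg (fun h => hav h.symm), add_zero]
    rw [Finset.sum_congr rfl h1, Finset.sum_add_distrib, ← Finset.card_filter]
    have h2 : ((U.erase v).filter (fun i => H.Adj v i)).card ≤ (U.filter (H.Adj v)).card :=
      Finset.card_le_card (Finset.filter_subset_filter (H.Adj v) (Finset.erase_subset v U))
    rw [mul_add, mul_one]
    omega


lemma no_dense {V : Type*} [DecidableEq V] (H : SimpleGraph V) [DecidableRel H.Adj]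
    (hbip : H.Colorable 2) (u : V) (l : ℕ) (hl : 2 ≤ l)
    (hfree : ∀ (v : V) (w : H.Walk v v), w.IsCycle → w.length ≠ 2 * l)
    (i : ℕ) (hi : i + 1 ≤ l) (S : Finset V) (hne : S.Nonempty)
    (hS : ∀ v ∈ S, H.Reachable u v ∧ (H.dist u v = i ∨ H.dist u v = i + 1)) :
    ∃ v ∈ S, (S.filter (H.Adj v)).card ≤ l := by
  by_contra! hcon
  have hpar : ∀ v, ∃ p, H.Reachable u v → H.dist u v ≠ 0 →
      H.Adj v p ∧ H.Reachable u p ∧ H.dist u p + 1 = H.dist u v := by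
    intro v
    by_cases h : H.Reachable u v ∧ H.dist u v ≠ 0
    · obtain ⟨p, hp⟩ := exists_parent H u v h.1 h.2
      exact ⟨p, fun _ _ => hp⟩
    · exact ⟨v, fun h1 h2 => absurd ⟨h1, h2⟩ h⟩
  choose f hf using hpar
  have hit : ∀ v, H.Reachable u v → ∀ q ≤ H.dist u v,
      H.Reachable u (f^[q] v) ∧ H.dist u (f^[q] v) + q = H.dist u v := by
    intro v hv q
    induction q with
    | zero => intro _; exact ⟨hv, rfl⟩
    | succ q ih =>
      intro hq
      obtain ⟨h1, h2⟩ := ih (by omega)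
      rw [Function.iterate_succ_apply']
      obtain ⟨_, h4, h5⟩ := hf _ h1 (by omega)
      exact ⟨h4, by omega⟩
  have hitadj : ∀ v, H.Reachable u v → ∀ q < H.dist u v, H.Adj (f^[q] v) (f^[q+1] v) := by
    intro v hv q hq
    obtain ⟨h1, h2⟩ := hit v hv q hq.le
    rw [Function.iterate_succ_apply']
    exact (hf _ h1 (by omega)).1
  have hdist : ∀ a ∈ S, ∀ b ∈ S, H.Adj a b →
      (H.dist u a = i ∧ H.dist u b = i + 1) ∨ (H.dist u a = i + 1 ∧ H.dist u b = i) := by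
    intro a ha b hb hab
    have h1 := adj_dist H hbip u a b (hS a ha).1 hab
    have h2 := (hS a ha).2
    have h3 := (hS b hb).2
    omega
  have hx0 : ∃ x ∈ S, H.dist u x = i + 1 := by
    obtain ⟨v, hv⟩ := hne
    rcases (hS v hv).2 with h | h
    · have := hcon v hv
      obtain ⟨b, hb⟩ := Finset.card_pos.1 (show 0 < (S.filter (H.Adj v)).card by omega)
      obtain ⟨hb, hvb⟩ := Finset.mem_filter.1 hb
      refine ⟨b, hb, ?_⟩
      have := hdist v hv b hb hvb
      omega
    · exact ⟨v, hv, h⟩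
  let D : ℕ → Prop := fun t => ∀ x ∈ S, H.dist u x = i + 1 → ∀ y ∈ S, ∀ y' ∈ S,
    H.Adj x y → H.Adj x y' → f^[t] y = f^[t] y'
  have hDi : D i := by
    intro x hx hxi y hy y' hy' hxy hxy'
    have key : ∀ y ∈ S, H.Adj x y → f^[i] y = u := by
      intro y hy hxy
      have h1 : H.dist u y = i := by have := hdist x hx y hy hxy; omega
      obtain ⟨h2, h3⟩ := hit y (hS y hy).1 i h1.ge
      exact (h2.dist_eq_zero_iff.1 (by omega)).symm
    rw [key y hy hxy, key y' hy' hxy']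
  have hD0 : ¬ D 0 := by
    intro h
    obtain ⟨x, hx, hxi⟩ := hx0
    have h1 := hcon x hx
    have h2 : (S.filter (H.Adj x)).card ≤ 1 := by
      rw [Finset.card_le_one]
      intro a ha b hb
      obtain ⟨ha, hxa⟩ := Finset.mem_filter.1 ha
      obtain ⟨hb, hxb⟩ := Finset.mem_filter.1 hb
      exact h x hx hxi a ha b hb hxa hxb
    omega
  have hs : ∃ s, s + 1 ≤ i ∧ ¬ D s ∧ D (s + 1) := by
    classical
    have hex : ∃ t, D t := ⟨i, hDi⟩
    have h1 : Nat.find hex ≠ 0 := fun h => hD0 (h ▸ Nat.find_spec hex)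
    obtain ⟨s, hs⟩ := Nat.exists_eq_succ_of_ne_zero h1
    have hle := Nat.find_min' hex hDi
    refine ⟨s, by omega, Nat.find_min hex (by omega), ?_⟩
    have := Nat.find_spec hex
    rwa [hs] at this
  obtain ⟨s, hsi, hDs, hDs1⟩ := hs
  simp only [D] at hDs
  push Not at hDs
  obtain ⟨x, hx, hxi, y, hy, y', hy', hxy, hxy', hyy'⟩ := hDs
  let Inv : V → Prop := fun v => (H.dist u v = i → f^[s+1] v = f^[s+1] y) ∧
    (H.dist u v = i + 1 → ∀ b ∈ S, H.Adj v b → f^[s+1] b = f^[s+1] y)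
  classical
  have hclosed : ∀ a ∈ S, Inv a → ∀ b ∈ S, H.Adj a b → Inv b := by
    intro a ha hia b hb hab
    rcases hdist a ha b hb hab with ⟨h1, h2⟩ | ⟨h1, h2⟩
    · refine ⟨fun h => by omega, fun _ c hc hbc => ?_⟩
      rw [← hia.1 h1]
      exact hDs1 b hb h2 c hc a ha hbc hab.symm
    · exact ⟨fun _ => hia.2 h1 b hb hab, fun h => by omega⟩
  have hInvx : Inv x := by
    refine ⟨fun h => by omega, fun _ b hb hxb => hDs1 x hx hxi b hb y hy hxb hxy⟩
  let T := S.filter Inv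
  have hTdeg : ∀ a ∈ T, l + 1 ≤ (T.filter (H.Adj a)).card := by
    intro a ha
    obtain ⟨haS, hai⟩ := Finset.mem_filter.1 ha
    refine le_trans (hcon a haS) (Finset.card_le_card ?_)
    intro b hb
    obtain ⟨hbS, hab⟩ := Finset.mem_filter.1 hb
    exact Finset.mem_filter.2 ⟨Finset.mem_filter.2 ⟨hbS, hclosed a haS hai b hbS hab⟩, hab⟩
  obtain ⟨w, P, hP, hPl, hPs, hcol, -, -⟩ := greedy H T (fun v => decide (H.dist u v = i + 1))
    (by
      intro a ha b hb hab
      have := hdist a (Finset.mem_filter.1 ha).1 b (Finset.mem_filter.1 hb).1 hab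
      rcases this with ⟨h1, h2⟩ | ⟨h1, h2⟩ <;> simp [h1, h2])
    l hTdeg x y y' (Finset.mem_filter.2 ⟨hx, hInvx⟩) hxy.ne hxy'.ne
    (2 * (l - (s + 1)) - 1) (by omega)
  have hwT := (hPs w P.end_mem_support).1
  obtain ⟨hwS, hwI⟩ := Finset.mem_filter.1 hwT
  have hwi : H.dist u w = i := by
    have hodd : ¬ Even (2 * (l - (s + 1)) - 1) := by
      rw [Nat.not_even_iff_odd]
      exact ⟨l - (s + 1) - 1, by omega⟩
    have h1 : H.dist u w ≠ i + 1 := by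
      intro h
      apply hodd
      rw [← hcol]
      simp [h, hxi]
    have := (hS w hwS).2
    omega
  have hyi : H.dist u y = i := by have := hdist x hx y hy hxy; omega
  have hyi' : H.dist u y' = i := by have := hdist x hx y' hy' hxy'; omega
  have final : ∀ z ∈ S, H.Adj x z → H.dist u z = i → z ∉ P.support →
      f^[s+1] z = f^[s+1] w → f^[s] z ≠ f^[s] w → False := by
    intro z hz hxz hzi hzP h1 h2
    obtain ⟨v, c, hc, hcl⟩ := tree_cycle H f (H.dist u) i s (l - (s + 1)) (by omega) z w
      (Walk.cons hxz.symm P) (hP.cons hzP) (by rw [Walk.length_cons]; omega)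
      (by
        intro v hv
        rw [Walk.support_cons, List.mem_cons] at hv
        rcases hv with rfl | hv
        · exact hzi.ge
        · have := (hS v (Finset.mem_filter.1 (hPs v hv).1).1).2
          omega)
      (fun q hq => hitadj z (hS z hz).1 q (by omega))
      (fun q hq => hitadj w (hS w hwS).1 q (by omega))
      (fun q hq => by rw [← hzi]; exact (hit z (hS z hz).1 q (by omega)).2)
      (fun q hq => by
        have := (hit w (hS w hwS).1 q (by omega)).2
        omega) h1 h2
    exact hfree v c hc (by omega)
  have hwy := hwI.1 hwi
  by_cases h : f^[s] y = f^[s] w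
  · exact final y' hy' hxy' hyi' (fun h => (hPs _ h).2.2 rfl)
      ((hDs1 x hx hxi y' hy' y hy hxy' hxy).trans hwy.symm) (fun h' => hyy' (h.trans h'.symm))
  · exact final y hy hxy hyi (fun h => (hPs _ h).2.1 rfl) hwy.symm h

/-- The sphere of radius `i` around `u`. -/
noncomputable def layer {V : Type*} [Fintype V] (H : SimpleGraph V) (u : V) (i : ℕ) : Finset V :=
  open Classical in Finset.univ.filter (fun v => H.Reachable u v ∧ H.dist u v = i)

lemma mem_layer {V : Type*} [Fintype V] (H : SimpleGraph V) (u : V) (i : ℕ) (v : V) :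
    v ∈ layer H u i ↔ H.Reachable u v ∧ H.dist u v = i := by
  simp [layer]

lemma layer_disj {V : Type*} [Fintype V] (H : SimpleGraph V) (u : V) (i j : ℕ) (h : i ≠ j) :
    Disjoint (layer H u i) (layer H u j) := by
  rw [Finset.disjoint_left]
  intro a ha hb
  rw [mem_layer] at ha hb
  omega

/-- Number of edges between consecutive layers, counted from below. -/
lemma edge_bound {V : Type*} [Fintype V] [DecidableEq V] (H : SimpleGraph V) [DecidableRel H.Adj]
    (hbip : H.Colorable 2) (u : V) (l : ℕ) (hl : 2 ≤ l)
    (hfree : ∀ (v : V) (w : H.Walk v v), w.IsCycle → w.length ≠ 2 * l)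
    (i : ℕ) (hi : i + 1 ≤ l) :
    ∑ v ∈ layer H u i, ((layer H u (i+1)).filter (H.Adj v)).card ≤
      l * ((layer H u i).card + (layer H u (i+1)).card) ∧
    ∑ v ∈ layer H u (i+1), ((layer H u i).filter (H.Adj v)).card ≤
      l * ((layer H u i).card + (layer H u (i+1)).card) := by
  have hdis := layer_disj H u i (i+1) (by omega)
  have h := degenerate_sum H l (layer H u i ∪ layer H u (i+1)) (fun S hS hne =>
    no_dense H hbip u l hl hfree i hi S hne (fun v hv => by
      have := hS hv
      rw [Finset.mem_union, mem_layer, mem_layer] at this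
      tauto))
  rw [Finset.sum_union hdis, Finset.card_union_of_disjoint hdis] at h
  have hcomm : ∑ v ∈ layer H u i, ((layer H u (i+1)).filter (H.Adj v)).card =
      ∑ v ∈ layer H u (i+1), ((layer H u i).filter (H.Adj v)).card := by
    simp only [Finset.card_filter]
    rw [Finset.sum_comm]
    simp only [H.adj_comm]
  have h1 : ∑ v ∈ layer H u i, ((layer H u (i+1)).filter (H.Adj v)).card ≤
      ∑ v ∈ layer H u i, ((layer H u i ∪ layer H u (i+1)).filter (H.Adj v)).card :=
    Finset.sum_le_sum fun v _ => Finset.card_le_card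
      (Finset.filter_subset_filter _ Finset.subset_union_right)
  have h2 : ∑ v ∈ layer H u (i+1), ((layer H u i).filter (H.Adj v)).card ≤
      ∑ v ∈ layer H u (i+1), ((layer H u i ∪ layer H u (i+1)).filter (H.Adj v)).card :=
    Finset.sum_le_sum fun v _ => Finset.card_le_card
      (Finset.filter_subset_filter _ Finset.subset_union_left)
  rw [mul_assoc] at h
  omega

lemma growth_step {V : Type*} [Fintype V] [DecidableEq V] (H : SimpleGraph V) [DecidableRel H.Adj]
    (hbip : H.Colorable 2) (u : V) (l d : ℕ) (hl : 2 ≤ l)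
    (hfree : ∀ (v : V) (w : H.Walk v v), w.IsCycle → w.length ≠ 2 * l)
    (hdeg : ∀ v : V, d ≤ (H.neighborSet v).ncard)
    (i : ℕ) (hi : i + 2 ≤ l) :
    d * (layer H u (i+1)).card ≤
      l * ((layer H u i).card + 2 * (layer H u (i+1)).card + (layer H u (i+2)).card) := by
  have h1 := (edge_bound H hbip u l hl hfree i (by omega)).2
  have h2 := (edge_bound H hbip u l hl hfree (i+1) (by omega)).1
  have h3 : ∑ v ∈ layer H u (i+1), d ≤ ∑ v ∈ layer H u (i+1),
      (((layer H u i).filter (H.Adj v)).card + ((layer H u (i+2)).filter (H.Adj v)).card) := by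
    refine Finset.sum_le_sum fun v hv => (hdeg v).trans ?_
    refine le_trans ?_ (Finset.card_union_le _ _)
    rw [← Set.ncard_coe_finset]
    refine Set.ncard_le_ncard ?_ (Finset.finite_toSet _)
    intro b hb
    rw [mem_neighborSet] at hb
    rw [mem_layer] at hv
    have hrb := hv.1.trans hb.reachable
    have := adj_dist H hbip u v b hv.1 hb
    simp only [Finset.coe_union, Finset.coe_filter, Set.mem_union, Set.mem_ofPred_eq, mem_layer]
    rcases this with h | h
    · right; exact ⟨⟨hrb, by omega⟩, hb⟩
    · left; exact ⟨⟨hrb, by omega⟩, hb⟩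
  rw [Finset.sum_add_distrib, Finset.sum_const, smul_eq_mul] at h3
  nlinarith

lemma layer_growth {V : Type*} [Fintype V] (H : SimpleGraph V)
    (hbip : H.Colorable 2) (u : V) (l d : ℕ) (hl : 2 ≤ l)
    (hfree : ∀ (v : V) (w : H.Walk v v), w.IsCycle → w.length ≠ 2 * l)
    (hdeg : ∀ v : V, d ≤ (H.neighborSet v).ncard) (x : ℝ) (hx : 1 ≤ x) (hxd : (d : ℝ) = 4 * l * x)
    (i : ℕ) (hi : i + 1 ≤ l) :
    x * (layer H u i).card ≤ (layer H u (i+1)).card := by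
  classical
  have hl' : (2 : ℝ) ≤ l := by exact_mod_cast hl
  induction i with
  | zero =>
    have h0 : layer H u 0 = {u} := by
      ext v
      rw [mem_layer, Finset.mem_singleton]
      constructor
      · rintro ⟨h1, h2⟩
        exact (h1.dist_eq_zero_iff.1 h2).symm
      · rintro rfl
        simp
    have h1 : d ≤ (layer H u 1).card := by
      refine (hdeg u).trans ?_
      rw [← Set.ncard_coe_finset]
      refine Set.ncard_le_ncard ?_ (Finset.finite_toSet _)
      intro b hb
      rw [mem_neighborSet] at hb
      rw [Finset.mem_coe, mem_layer]
      exact ⟨hb.reachable, dist_eq_one_iff_adj.2 hb⟩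
    have h1' : (d : ℝ) ≤ (layer H u 1).card := by exact_mod_cast h1
    rw [h0, Finset.card_singleton, zero_add]
    push_cast
    nlinarith
  | succ i ih =>
    have ih' := ih (by omega)
    have hs := growth_step H hbip u l d hl hfree hdeg i (by omega)
    have hs' : (d : ℝ) * (layer H u (i+1)).card ≤
      l * ((layer H u i).card + 2 * (layer H u (i+1)).card + (layer H u (i+2)).card) := by
      exact_mod_cast hs
    change x * (layer H u (i+1)).card ≤ (layer H u (i+2)).card
    generalize ((layer H u (i+2)).card : ℝ) = c at *
    have hb : (0 : ℝ) ≤ (layer H u (i+1)).card := by positivity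
    have ha : (0 : ℝ) ≤ (layer H u i).card := by positivity
    generalize ((layer H u (i+1)).card : ℝ) = b at *
    generalize ((layer H u i).card : ℝ) = a at *
    rw [hxd] at hs'
    have h1 : 4 * x * b ≤ a + 2 * b + c := by
      have : (l : ℝ) * (4 * x * b) ≤ l * (a + 2 * b + c) := by linarith
      exact le_of_mul_le_mul_left this (by linarith)
    nlinarith

end BallGrowth


/-- Let `ℓ ≥ 2`, `d ≥ 1` and let `H` be a bipartite `C_{2ℓ}`-free graph with minimum degree
at least `d`. Then for any vertex `u`, the number of vertices at distance at most `ℓ`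
from `u` is at least `(d/(4ℓ))^ℓ`. -/
theorem stmt_9 {V : Type*} [Fintype V] (H : SimpleGraph V) (ℓ d : ℕ)
    (hℓ : 2 ≤ ℓ) (hd : 1 ≤ d) (hbip : H.Colorable 2)
    (hfree : ∀ (v : V) (w : H.Walk v v), w.IsCycle → w.length ≠ 2 * ℓ)
    (hdeg : ∀ v : V, d ≤ (H.neighborSet v).ncard) :
    ∀ u : V,
      ((d : ℝ) / (4 * ℓ)) ^ ℓ ≤ (({v | H.Reachable u v ∧ H.dist u v ≤ ℓ}).ncard : ℝ) := by
  intro u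
  have hl' : (2 : ℝ) ≤ ℓ := by exact_mod_cast hℓ
  have hset : ∀ i ≤ ℓ, ((BallGrowth.layer H u i).card : ℝ) ≤
      (({v | H.Reachable u v ∧ H.dist u v ≤ ℓ}).ncard : ℝ) := by
    intro i hi
    rw [← Set.ncard_coe_finset, Nat.cast_le]
    refine Set.ncard_le_ncard ?_ (Set.toFinite _)
    intro v hv
    rw [Finset.mem_coe, BallGrowth.mem_layer] at hv
    exact ⟨hv.1, by omega⟩
  have h0 : (1 : ℝ) ≤ (BallGrowth.layer H u 0).card := by
    norm_cast
    exact Finset.card_pos.2 ⟨u, by rw [BallGrowth.mem_layer]; simp⟩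
  rcases le_total ((d : ℝ) / (4 * ℓ)) 1 with hx | hx
  · exact (pow_le_one₀ (by positivity) hx).trans (h0.trans (hset 0 (by omega)))
  · refine le_trans ?_ (hset ℓ le_rfl)
    have key : ∀ i ≤ ℓ, ((d : ℝ) / (4 * ℓ)) ^ i ≤ (BallGrowth.layer H u i).card := by
      intro i
      induction i with
      | zero => intro _; simpa using h0
      | succ i ih =>
        intro hi
        refine le_trans ?_ (BallGrowth.layer_growth H hbip u ℓ d hℓ hfree hdeg _ hx
          (by field_simp) i hi)
        rw [pow_succ']
        exact mul_le_mul_of_nonneg_left (ih (by omega)) (by positivity)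
    exact key ℓ le_rfl
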